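/- arXiv:1308.0686 — 4 statements merged into one kernel-verified Lean document; each statement's English description precedes it below -/
import Mathlib

section
/- Threshold structure of the optimal policy (sum power, no backtracking): Let W ⊂ (0,∞) be a nonempty finite set with strictly positive probability mass function p_W, S ⊂ (0,∞) a nonempty finite set, θ ∈ (0,1), ξ_o ≥ 0, ξ_r ≥ 0, and integers A ≥ 0, B ≥ 2. Let P_out : {1,…,A+B} × S × W → [0,1] be nondecreasing in its first argument. Write E_W f := Σ_{w∈W} p_W(w) f(w) and m(r,w) := min_{γ∈S} ( γ + ξ_o·P_out(r,γ,w) ). Suppose J : {A+1,…,A+B} × W → ℝ and J₀ ∈ ℝ satisfy the Bellman equations: for A+1 ≤ r ≤ A+B−1, J(r,w) = min{ m(r,w) + ξ_r + J₀ , θ·E_W m(r+1,·) + (1−θ)·E_W J(r+1,·) }, and J(A+B,w) = m(A+B,w) + ξ_r + J₀, and assume that for each w ∈ W the map r ↦ J(r,w) is nondecreasing on {A+1,…,A+B}. Define c_th(r) := θ·E_W m(r+1,·) + (1−θ)·E_W J(r+1,·) − ξ_r − J₀ for A+1 ≤ r ≤ A+B−1. Then: (i) for each A+1 ≤ r ≤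 A+B−1 and w ∈ W, the first (placement) term attains the minimum in the Bellman equation at (r,w) if and only if m(r,w) ≤ c_th(r); (ii) the threshold c_th(r) is nondecreasing in r on {A+1,…,A+B−1}. -/
/-!
The Bellman equations make `J r` nondecreasing in `r`, by backward induction from the last
location `b`, where placing is compulsory: `J (b - 1)` is at most the cost of placing at `b - 1`,
which is at most the cost of placing at `b`, that is `J b`. Further back, both arguments of the
minimum defining `J r` increase with `r`: the first because `m` does, the second because it is an
average of `m (r + 1)` and `J (r + 1)`. That average minus `ξr + J₀` is the threshold, so the
threshold increases as well.
-/

section WeightedSum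

variable {ι R : Type*} [Semiring R] {s : Finset ι}

theorem sum_mul_le_sum_mul_of_nonneg_left [PartialOrder R] [IsOrderedRing R] {p f g : ι → R}
    (hp : ∀ i ∈ s, 0 ≤ p i) (hfg : ∀ i ∈ s, f i ≤ g i) :
    ∑ i ∈ s, p i * f i ≤ ∑ i ∈ s, p i * g i :=
  Finset.sum_le_sum fun i hi => mul_le_mul_of_nonneg_left (hfg i hi) (hp i hi)

theorem monotoneOn_inf'_add_mul [LinearOrder R] [IsOrderedRing R] {α : Type*} [Preorder α]
    {t : Set α} (hs : s.Nonempty) (c : ι → R) {ξ : R} (hξ : 0 ≤ ξ) {P : α → ι → R}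
    (hP : ∀ i ∈ s, MonotoneOn (P · i) t) :
    MonotoneOn (fun r => s.inf' hs fun i => c i + ξ * P r i) t := fun _ hr _ hr' hrr' =>
  Finset.inf'_mono_fun fun i hi =>
    add_le_add_right (mul_le_mul_of_nonneg_left (hP i hi hr hr' hrr') hξ) (c i)

end WeightedSum

section Bellman

variable {Ω R : Type*} [Ring R] {W : Set Ω} {E : (Ω → R) → R} {θ c : R} {m J : ℕ → Ω → R}
  {a b : ℕ}

/-- The expected cost of moving on from `r` without placing a relay: with probability `θ` the line
ends at the next step, at the one-hop cost `m (r + 1)`, and otherwise the cost-to-go `J (r + 1)` is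
incurred. `E` is the expectation over the shadowing. -/
def continuationCost (E : (Ω → R) → R) (θ : R) (m J : ℕ → Ω → R) (r : ℕ) : R :=
  θ * E (m (r + 1)) + (1 - θ) * E (J (r + 1))

theorem continuationCost_le_continuationCost [PartialOrder R] [IsOrderedRing R]
    (hE : ∀ f g : Ω → R, (∀ w ∈ W, f w ≤ g w) → E f ≤ E g) (hθ : 0 ≤ θ) (hθ1 : θ ≤ 1) {r r' : ℕ}
    (hm : ∀ w ∈ W, m (r + 1) w ≤ m (r' + 1) w) (hJ : ∀ w ∈ W, J (r + 1) w ≤ J (r' + 1) w) :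
    continuationCost E θ m J r ≤ continuationCost E θ m J r' :=
  add_le_add (mul_le_mul_of_nonneg_left (hE _ _ hm) hθ)
    (mul_le_mul_of_nonneg_left (hE _ _ hJ) (sub_nonneg.mpr hθ1))

variable [LinearOrder R]

/-- `J` solves the Bellman equations of relay placement for distances `a, …, b` and shadowing
values in `W`. Placing costs `m r w + c`, where `c` stands for `ξ_r + J₀`, and is compulsory at
`r = b`. -/
structure IsBellmanSolution (W : Set Ω) (E : (Ω → R) → R) (θ c : R) (m J : ℕ → Ω → R)
    (a b : ℕ) : Prop where
  eq_min : ∀ r ∈ Set.Ico a b, ∀ w ∈ W, J r w = min (m r w + c) (continuationCost E θ m J r)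
  eq_terminal : ∀ w ∈ W, J b w = m b w + c

variable [IsOrderedRing R]

namespace IsBellmanSolution

theorem le_succ (h : IsBellmanSolution W E θ c m J a b)
    (hE : ∀ f g : Ω → R, (∀ w ∈ W, f w ≤ g w) → E f ≤ E g) (hθ : 0 ≤ θ) (hθ1 : θ ≤ 1)
    (hm : ∀ w ∈ W, MonotoneOn (m · w) (Set.Icc a b)) {r : ℕ} (har : a ≤ r) (hrb : r + 1 ≤ b) :
    ∀ w ∈ W, J r w ≤ J (r + 1) w := by
  have placement_le : ∀ w ∈ W, m r w + c ≤ m (r + 1) w + c := fun w hw =>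
    add_le_add_left (hm w hw ⟨har, by lia⟩ ⟨by lia, hrb⟩ r.le_succ) c
  obtain hlast | hlt := hrb.eq_or_lt
  · intro w hw
    calc J r w ≤ m r w + c := (h.eq_min r ⟨har, hrb⟩ w hw).trans_le (min_le_left _ _)
      _ ≤ m (r + 1) w + c := placement_le w hw
      _ = J (r + 1) w := by rw [hlast, h.eq_terminal w hw]
  · have next_le : ∀ w ∈ W, J (r + 1) w ≤ J (r + 1 + 1) w :=
      h.le_succ hE hθ hθ1 hm (by lia) hlt
    have continuation_le : continuationCost E θ m J r ≤ continuationCost E θ m J (r + 1) :=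
      continuationCost_le_continuationCost hE hθ hθ1
        (fun w hw => hm w hw ⟨by lia, hrb⟩ ⟨by lia, hlt⟩ (r + 1).le_succ) next_le
    intro w hw
    rw [h.eq_min r ⟨har, hrb⟩ w hw, h.eq_min (r + 1) ⟨by lia, hlt⟩ w hw]
    exact min_le_min (placement_le w hw) continuation_le
termination_by b - r

theorem monotoneOn (h : IsBellmanSolution W E θ c m J a b)
    (hE : ∀ f g : Ω → R, (∀ w ∈ W, f w ≤ g w) → E f ≤ E g) (hθ : 0 ≤ θ) (hθ1 : θ ≤ 1)
    (hm : ∀ w ∈ W, MonotoneOn (m · w) (Set.Icc a b)) {w : Ω} (hw : w ∈ W) :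
    MonotoneOn (J · w) (Set.Icc a b) :=
  monotoneOn_of_le_add_one Set.ordConnected_Icc fun _ _ hr hr' =>
    h.le_succ hE hθ hθ1 hm hr.1 hr'.2 w hw

theorem monotoneOn_continuationCost (h : IsBellmanSolution W E θ c m J a b)
    (hE : ∀ f g : Ω → R, (∀ w ∈ W, f w ≤ g w) → E f ≤ E g) (hθ : 0 ≤ θ) (hθ1 : θ ≤ 1)
    (hm : ∀ w ∈ W, MonotoneOn (m · w) (Set.Icc a b)) :
    MonotoneOn (continuationCost E θ m J) (Set.Ico a b) := by
  intro r hr r' hr' hrr'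
  have mem_succ : ∀ {k}, k ∈ Set.Ico a b → k + 1 ∈ Set.Icc a b := fun hk =>
    ⟨hk.1.trans (Nat.le_succ _), hk.2⟩
  exact continuationCost_le_continuationCost hE hθ hθ1
    (fun w hw => hm w hw (mem_succ hr) (mem_succ hr') (Nat.succ_le_succ hrr'))
    (fun w hw => h.monotoneOn hE hθ hθ1 hm hw (mem_succ hr) (mem_succ hr')
      (Nat.succ_le_succ hrr'))

end IsBellmanSolution

end Bellman

theorem threshold_structure_sum_power_general {Ω R : Type*} [Ring R] [LinearOrder R]
    [IsOrderedRing R] {W : Set Ω} {E : (Ω → R) → R}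
    (hE : ∀ f g : Ω → R, (∀ w ∈ W, f w ≤ g w) → E f ≤ E g)
    {θ : R} (hθ : 0 ≤ θ) (hθ1 : θ ≤ 1) {A B : ℕ} {m : ℕ → Ω → R}
    (hm : ∀ w ∈ W, MonotoneOn (m · w) (Set.Icc (A + 1) (A + B)))
    {ξr J₀ : R} {J : ℕ → Ω → R}
    (hBell : ∀ r, A + 1 ≤ r → r ≤ A + B - 1 → ∀ w ∈ W,
      J r w = min (m r w + ξr + J₀) (θ * E (m (r + 1)) + (1 - θ) * E (J (r + 1))))
    (hBellEnd : ∀ w ∈ W, J (A + B) w = m (A + B) w + ξr + J₀)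
    {cth : ℕ → R}
    (hcth : ∀ r, A + 1 ≤ r → r ≤ A + B - 1 →
      cth r = θ * E (m (r + 1)) + (1 - θ) * E (J (r + 1)) - ξr - J₀) :
    (∀ r, A + 1 ≤ r → r ≤ A + B - 1 → ∀ w ∈ W,
      (min (m r w + ξr + J₀) (θ * E (m (r + 1)) + (1 - θ) * E (J (r + 1)))
          = m r w + ξr + J₀
        ↔ m r w ≤ cth r)) ∧
    (∀ r r', A + 1 ≤ r → r ≤ r' → r' ≤ A + B - 1 → cth r ≤ cth r') := by
  have solution : IsBellmanSolution W E θ (ξr + J₀) m J (A + 1) (A + B) :=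
    { eq_min := fun r hr w hw => by
        rw [hBell r hr.1 (Nat.le_sub_one_of_lt hr.2) w hw, add_assoc, continuationCost]
      eq_terminal := fun w hw => by rw [hBellEnd w hw, add_assoc] }
  refine ⟨fun r hr hr' w _ => ?_, fun r r' hr hrr' hr' => ?_⟩
  · rw [hcth r hr hr', min_eq_left_iff, le_sub_iff_add_le, le_sub_iff_add_le,
      add_right_comm]
  · rw [hcth r hr (hrr'.trans hr'), hcth r' (hr.trans hrr') hr']
    have continuation_le : continuationCost E θ m J r ≤ continuationCost E θ m J r' :=
      solution.monotoneOn_continuationCost hE hθ hθ1 hm ⟨hr, by lia⟩ ⟨by lia, by lia⟩ hrr'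
    exact sub_le_sub_right (sub_le_sub_right continuation_le ξr) J₀

/-- Threshold structure of the optimal policy (sum power, no backtracking): at state `(r,w)`
the placement term attains the minimum in the Bellman equation iff `m(r,w) ≤ c_th(r)`,
and the threshold `c_th` is nondecreasing in `r`. -/
theorem threshold_structure_sum_power
    (W : Finset ℝ) (hW : W.Nonempty) (hWpos : ∀ w ∈ W, 0 < w)
    (pW : ℝ → ℝ) (hpW : ∀ w ∈ W, 0 < pW w) (hpWsum : ∑ w ∈ W, pW w = 1)
    (S : Finset ℝ) (hS : S.Nonempty) (hSpos : ∀ γ ∈ S, 0 < γ)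
    (θ : ℝ) (hθ : 0 < θ) (hθ1 : θ < 1)
    (ξo ξr : ℝ) (hξo : 0 ≤ ξo) (hξr : 0 ≤ ξr)
    (A B : ℕ) (hB : 2 ≤ B)
    (Pout : ℕ → ℝ → ℝ → ℝ)
    (hPrange : ∀ r, 1 ≤ r → r ≤ A + B → ∀ γ ∈ S, ∀ w ∈ W,
      0 ≤ Pout r γ w ∧ Pout r γ w ≤ 1)
    (hPmono : ∀ γ ∈ S, ∀ w ∈ W, ∀ r r', 1 ≤ r → r ≤ r' → r' ≤ A + B →
      Pout r γ w ≤ Pout r' γ w)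
    -- the optimal one-hop cost `m(r,w) = min_{γ∈S}(γ + ξ_o P_out(r,γ,w))`
    (m : ℕ → ℝ → ℝ) (hm : ∀ r w, m r w = S.inf' hS fun γ => γ + ξo * Pout r γ w)
    -- expectation over the shadowing `E_W f = Σ_w p_W(w) f(w)`
    (EW : (ℝ → ℝ) → ℝ) (hEW : ∀ f, EW f = ∑ w ∈ W, pW w * f w)
    -- the optimal cost-to-go, satisfying the Bellman equations
    (J : ℕ → ℝ → ℝ) (J₀ : ℝ)
    (hBell : ∀ r, A + 1 ≤ r → r ≤ A + B - 1 → ∀ w ∈ W,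
      J r w = min (m r w + ξr + J₀)
        (θ * EW (m (r + 1)) + (1 - θ) * EW (J (r + 1))))
    (hBellEnd : ∀ w ∈ W, J (A + B) w = m (A + B) w + ξr + J₀)
    -- `J(r,w)` nondecreasing in `r`
    (hJmono : ∀ w ∈ W, ∀ r r', A + 1 ≤ r → r ≤ r' → r' ≤ A + B → J r w ≤ J r' w)
    -- the threshold
    (cth : ℕ → ℝ)
    (hcth : ∀ r, A + 1 ≤ r → r ≤ A + B - 1 →
      cth r = θ * EW (m (r + 1)) + (1 - θ) * EW (J (r + 1)) - ξr - J₀) :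
    -- (i) placement is optimal iff `m(r,w) ≤ c_th(r)`
    (∀ r, A + 1 ≤ r → r ≤ A + B - 1 → ∀ w ∈ W,
      (min (m r w + ξr + J₀) (θ * EW (m (r + 1)) + (1 - θ) * EW (J (r + 1)))
          = m r w + ξr + J₀
        ↔ m r w ≤ cth r)) ∧
    -- (ii) `c_th` is nondecreasing
    (∀ r r', A + 1 ≤ r → r ≤ r' → r' ≤ A + B - 1 → cth r ≤ cth r') := by
  have expectation_mono : ∀ f g : ℝ → ℝ, (∀ w ∈ W, f w ≤ g w) → EW f ≤ EW g := fun f g hfg => by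
    simpa only [hEW] using sum_mul_le_sum_mul_of_nonneg_left (fun w hw => (hpW w hw).le) hfg
  have oneHopCost_mono : ∀ w ∈ W, MonotoneOn (m · w) (Set.Icc (A + 1) (A + B)) := fun w hw => by
    simpa only [hm] using monotoneOn_inf'_add_mul hS (fun γ => γ) hξo fun γ hγ r hr r' hr' hrr' =>
      hPmono γ hγ w hw r r' (Nat.le_of_add_left_le hr.1) hrr' hr'.2
  exact threshold_structure_sum_power_general expectation_mono hθ.le hθ1.le oneHopCost_mono
    hBell hBellEnd hcth
end

section
/- Structural properties of the max-power no-backtracking value iterates: Let W ⊂ (0,∞) be a nonempty finite set with strictly positive probability mass function p_W, S ⊂ (0,∞) a nonempty finite set, θ ∈ (0,1), ξ_o ≥ 0, ξ_r ≥ 0, integers A ≥ 0, B ≥ 2, and G := {0} ∪ S. Assume P_out : {1,…,A+B} × S × W → [0,1] is nondecreasing in its first argument and nonincreasing in its third argument. Define the value iteration: J^{(0)} ≡ 0 on {A+1,…,A+B} × W × G, J₀^{(0)} ≡ 0 on G, and for k ≥ 0: J^{(k+1)}(r,w,γ_max) = min{ min_{γ∈S}( ξ_o·P_out(r,γ,w)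 + ξ_r + J₀^{(k)}(max{γ,γ_max}) ) , θ·E_W min_{γ∈S}( max{γ,γ_max} + ξ_o·P_out(r+1,γ,·) ) + (1−θ)·E_W J^{(k)}(r+1,·,γ_max) } for A+1 ≤ r ≤ A+B−1; J^{(k+1)}(A+B,w,γ_max) = min_{γ∈S}( ξ_o·P_out(A+B,γ,w) + ξ_r + J₀^{(k)}(max{γ,γ_max}) ); J₀^{(k+1)}(γ_max) = Σ_{j=1}^{A+1} (1−θ)^{j−1}·θ·E_W min_{γ∈S}( max{γ,γ_max} + ξ_o·P_out(j,γ,·) ) + (1−θ)^{A+1}·E_W J^{(k)}(A+1,·,γ_max), where E_W f := Σ_{w∈W} p_W(w) f(w). Then for every k ≥ 0: J^{(k)}(r,w,γ_max) is nondecreasing in r, nondecreasing in γ_max, and nonincreasing in w; and J₀^{(k)}(γ_max) is nondecreasing in γ_max. -/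
/-!
The three monotonicity properties pass through the Bellman update independently. The shadowing
`w` enters an updated value only through the cost of placing a relay at once. Monotonicity in
`γ_max` is inherited from the previous iterates because `G` is closed under `max γ ·` for `γ ∈ S`.
For monotonicity in `r`, the option to keep walking disappears at `r = A + B`, so there the minimum
is taken over fewer alternatives, which can only increase the value.
-/

open Set

section MinUpToLast

variable {α β : Type*} [PartialOrder α] [SemilatticeInf β]

theorem monotoneOn_Icc_of_eq_inf_of_eq_right {a b : α} {f g h : α → β}
    (hf : ∀ x ∈ Ico a b, f x = g x ⊓ h x) (hfb : f b = g b)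
    (hg : MonotoneOn g (Icc a b)) (hh : MonotoneOn h (Ico a b)) : MonotoneOn f (Icc a b) := by
  have f_le_g : ∀ x ∈ Icc a b, f x ≤ g x := fun x hx ↦ by
    rcases hx.2.eq_or_lt with rfl | hxb
    · exact hfb.le
    · exact (hf x ⟨hx.1, hxb⟩).trans_le inf_le_left
  intro x hx y hy hxy
  rcases hy.2.eq_or_lt with rfl | hyb
  · exact (f_le_g x hx).trans ((hg hx hy hxy).trans hfb.ge)
  · have hx' : x ∈ Ico a b := ⟨hx.1, hxy.trans_lt hyb⟩
    have hy' : y ∈ Ico a b := ⟨hy.1, hyb⟩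
    rw [hf x hx', hf y hy']
    exact inf_le_inf (hg hx hy hxy) (hh hx' hy' hxy)

end MinUpToLast

/-- The data of the max-power no-backtracking relay placement problem: the finite shadowing set
`W` with its weights `pW`, the finite set `S` of transmit powers, the probability `θ` that the
line ends at the next step, the cost coefficients `ξo` and `ξr`, the admissible hop lengths
`A + 1, …, A + B`, and `Pout r γ w`, the outage of a link of `r` steps at power `γ` under
shadowing `w`. -/
structure RelayModel (Ω R : Type*) [Ring R] [LinearOrder R] where
  W : Finset Ω
  pW : Ω → R
  pW_nonneg : ∀ w ∈ W, 0 ≤ pW w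
  S : Finset R
  S_nonempty : S.Nonempty
  θ : R
  θ_nonneg : 0 ≤ θ
  θ_le_one : θ ≤ 1
  ξo : R
  ξo_nonneg : 0 ≤ ξo
  ξr : R
  A : ℕ
  B : ℕ
  B_pos : 0 < B
  Pout : ℕ → R → Ω → R

namespace RelayModel

section Costs

variable {Ω R : Type*} [Ring R] [LinearOrder R] (M : RelayModel Ω R)

/-- The `pW`-weighted sum `E_W f`. -/
def mean (f : Ω → R) : R :=
  ∑ w ∈ M.W, M.pW w * f w

/-- The least cost of placing a relay `r` steps after the previous node, when the cost-to-go from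
a new node is `V₀` as a function of the maximum power used so far. -/
def placementCost (V₀ : R → R) (r : ℕ) (w : Ω) (γmax : R) : R :=
  M.S.inf' M.S_nonempty fun γ ↦ M.ξo * M.Pout r γ w + M.ξr + V₀ (max γ γmax)

/-- The expected cost of the final link when the line ends `j` steps after the last node. -/
def terminalCost (j : ℕ) (γmax : R) : R :=
  M.mean fun w ↦ M.S.inf' M.S_nonempty fun γ ↦ max γ γmax + M.ξo * M.Pout j γ w

/-- The expected cost of walking one step further from distance `r` without placing a relay. -/
def continuationCost (V : ℕ → Ω → R → R) (r : ℕ) (γmax : R) : R :=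
  M.θ * M.terminalCost (r + 1) γmax + (1 - M.θ) * M.mean fun w ↦ V (r + 1) w γmax

/-- The expected cost-to-go from a newly placed node, after which no relay may be placed during
the first `A` steps. -/
def departureCost (V : ℕ → Ω → R → R) (γmax : R) : R :=
  (∑ j ∈ Finset.Icc 1 (M.A + 1), (1 - M.θ) ^ (j - 1) * M.θ * M.terminalCost j γmax) +
    (1 - M.θ) ^ (M.A + 1) * M.mean fun w ↦ V (M.A + 1) w γmax

/-- `(V', V₀')` is the value-iteration update of `(V, V₀)`; the values of `V'` and `V₀'` are
constrained only at admissible states with maximum power in `G`. -/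
structure IsBellmanUpdate (G : Set R) (V : ℕ → Ω → R → R) (V₀ : R → R)
    (V' : ℕ → Ω → R → R) (V₀' : R → R) : Prop where
  eq_min : ∀ r, M.A + 1 ≤ r → r < M.A + M.B → ∀ w ∈ M.W, ∀ γmax ∈ G,
    V' r w γmax = min (M.placementCost V₀ r w γmax) (M.continuationCost V r γmax)
  eq_placementCost : ∀ w ∈ M.W, ∀ γmax ∈ G,
    V' (M.A + M.B) w γmax = M.placementCost V₀ (M.A + M.B) w γmax
  eq_departureCost : ∀ γmax ∈ G, V₀' γmax = M.departureCost V γmax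

end Costs

section Monotonicity

variable {Ω R : Type*} [Ring R] [LinearOrder R] [IsOrderedRing R] (M : RelayModel Ω R)

theorem mean_mono {f g : Ω → R} (h : ∀ w ∈ M.W, f w ≤ g w) : M.mean f ≤ M.mean g :=
  Finset.sum_le_sum fun w hw ↦ mul_le_mul_of_nonneg_left (h w hw) (M.pW_nonneg w hw)

theorem one_sub_θ_nonneg : 0 ≤ 1 - M.θ :=
  sub_nonneg.2 M.θ_le_one

theorem placementCost_le_of_Pout_le (V₀ : R → R) {r r' : ℕ} {w w' : Ω}
    (h : ∀ γ ∈ M.S, M.Pout r γ w ≤ M.Pout r' γ w') (γmax : R) :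
    M.placementCost V₀ r w γmax ≤ M.placementCost V₀ r' w' γmax :=
  Finset.inf'_mono_fun fun γ hγ ↦ by
    have := mul_le_mul_of_nonneg_left (h γ hγ) M.ξo_nonneg
    gcongr

theorem monotoneOn_placementCost {G : Set R} (hG : ∀ γ ∈ M.S, ∀ g ∈ G, max γ g ∈ G)
    {V₀ : R → R} (hV₀ : MonotoneOn V₀ G) (r : ℕ) (w : Ω) :
    MonotoneOn (M.placementCost V₀ r w) G := fun g hg g' hg' hgg' ↦
  Finset.inf'_mono_fun fun γ hγ ↦
    add_le_add_right (hV₀ (hG γ hγ g hg) (hG γ hγ g' hg') (max_le_max_left γ hgg')) _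

theorem monotoneOn_terminalCost_dist {s : Set ℕ}
    (hP : ∀ γ ∈ M.S, ∀ w ∈ M.W, MonotoneOn (fun r ↦ M.Pout r γ w) s) (γmax : R) :
    MonotoneOn (fun j ↦ M.terminalCost j γmax) s := fun _ hj _ hj' hjj' ↦
  M.mean_mono fun w hw ↦ Finset.inf'_mono_fun fun γ hγ ↦
    add_le_add_right (mul_le_mul_of_nonneg_left (hP γ hγ w hw hj hj' hjj') M.ξo_nonneg) _

theorem monotone_terminalCost (j : ℕ) : Monotone (M.terminalCost j) := fun _ _ hgg' ↦
  M.mean_mono fun _ _ ↦ Finset.inf'_mono_fun fun γ _ ↦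
    add_le_add_left (max_le_max_left γ hgg') _

theorem monotoneOn_continuationCost_dist {s : Set ℕ} {V : ℕ → Ω → R → R} {γmax : R}
    (hP : ∀ γ ∈ M.S, ∀ w ∈ M.W, MonotoneOn (fun r ↦ M.Pout r γ w) s)
    (hV : ∀ w ∈ M.W, MonotoneOn (fun r ↦ V r w γmax) s) :
    MonotoneOn (fun r ↦ M.continuationCost V r γmax) {r | r + 1 ∈ s} := by
  intro r hr r' hr' hrr'
  have hsucc : r + 1 ≤ r' + 1 := Nat.succ_le_succ hrr'
  exact add_le_add
    (mul_le_mul_of_nonneg_left (M.monotoneOn_terminalCost_dist hP γmax hr hr' hsucc) M.θ_nonneg)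
    (mul_le_mul_of_nonneg_left (M.mean_mono fun w hw ↦ hV w hw hr hr' hsucc) M.one_sub_θ_nonneg)

theorem monotoneOn_continuationCost {G : Set R} {V : ℕ → Ω → R → R} {r : ℕ}
    (hV : ∀ w ∈ M.W, MonotoneOn (V (r + 1) w) G) :
    MonotoneOn (M.continuationCost V r) G := fun _ hg _ hg' hgg' ↦
  add_le_add (mul_le_mul_of_nonneg_left (M.monotone_terminalCost _ hgg') M.θ_nonneg)
    (mul_le_mul_of_nonneg_left (M.mean_mono fun w hw ↦ hV w hw hg hg' hgg') M.one_sub_θ_nonneg)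

theorem monotoneOn_departureCost {G : Set R} {V : ℕ → Ω → R → R}
    (hV : ∀ w ∈ M.W, MonotoneOn (V (M.A + 1) w) G) :
    MonotoneOn (M.departureCost V) G := fun _ hg _ hg' hgg' ↦
  add_le_add
    (Finset.sum_le_sum fun j _ ↦ mul_le_mul_of_nonneg_left (M.monotone_terminalCost j hgg')
      (mul_nonneg (pow_nonneg M.one_sub_θ_nonneg _) M.θ_nonneg))
    (mul_le_mul_of_nonneg_left (M.mean_mono fun w hw ↦ hV w hw hg hg' hgg')
      (pow_nonneg M.one_sub_θ_nonneg _))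

end Monotonicity

namespace IsBellmanUpdate

variable {Ω R : Type*} [Ring R] [LinearOrder R] [IsOrderedRing R] {M : RelayModel Ω R}
  {G : Set R} {V V' : ℕ → Ω → R → R} {V₀ V₀' : R → R}

theorem monotoneOn_dist (h : M.IsBellmanUpdate G V V₀ V' V₀')
    (hP : ∀ γ ∈ M.S, ∀ w ∈ M.W, MonotoneOn (fun r ↦ M.Pout r γ w) (Icc (M.A + 1) (M.A + M.B)))
    {γmax : R} (hγmax : γmax ∈ G)
    (hV : ∀ w ∈ M.W, MonotoneOn (fun r ↦ V r w γmax) (Icc (M.A + 1) (M.A + M.B)))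
    {w : Ω} (hw : w ∈ M.W) :
    MonotoneOn (fun r ↦ V' r w γmax) (Icc (M.A + 1) (M.A + M.B)) :=
  monotoneOn_Icc_of_eq_inf_of_eq_right
    (fun r hr ↦ h.eq_min r hr.1 hr.2 w hw γmax hγmax)
    (h.eq_placementCost w hw γmax hγmax)
    (fun _ hr _ hr' hrr' ↦
      M.placementCost_le_of_Pout_le V₀ (fun γ hγ ↦ hP γ hγ w hw hr hr' hrr') γmax)
    ((M.monotoneOn_continuationCost_dist hP hV).mono fun _ hr ↦ ⟨Nat.le_succ_of_le hr.1, hr.2⟩)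

theorem monotoneOn_maxPower (h : M.IsBellmanUpdate G V V₀ V' V₀')
    (hG : ∀ γ ∈ M.S, ∀ g ∈ G, max γ g ∈ G)
    (hV : ∀ r, M.A + 1 ≤ r → r ≤ M.A + M.B → ∀ w ∈ M.W, MonotoneOn (V r w) G)
    (hV₀ : MonotoneOn V₀ G) {r : ℕ} (hAr : M.A + 1 ≤ r) (hrB : r ≤ M.A + M.B)
    {w : Ω} (hw : w ∈ M.W) : MonotoneOn (V' r w) G := by
  have hplace := M.monotoneOn_placementCost hG hV₀ r w
  rcases hrB.eq_or_lt with rfl | hrB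
  · exact hplace.congr fun g hg ↦ (h.eq_placementCost w hw g hg).symm
  · have hcont := M.monotoneOn_continuationCost (hV (r + 1) (Nat.le_succ_of_le hAr) hrB)
    exact (hplace.inf hcont).congr fun g hg ↦ (h.eq_min r hAr hrB w hw g hg).symm

theorem antitoneOn_shadowing [Preorder Ω] (h : M.IsBellmanUpdate G V V₀ V' V₀')
    {r : ℕ} (hAr : M.A + 1 ≤ r) (hrB : r ≤ M.A + M.B)
    (hP : ∀ γ ∈ M.S, AntitoneOn (M.Pout r γ) M.W) {γmax : R} (hγmax : γmax ∈ G) :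
    AntitoneOn (fun w ↦ V' r w γmax) M.W := by
  intro w hw w' hw' hww'
  have hplace : M.placementCost V₀ r w' γmax ≤ M.placementCost V₀ r w γmax :=
    M.placementCost_le_of_Pout_le V₀ (fun γ hγ ↦ hP γ hγ hw hw' hww') γmax
  rcases hrB.eq_or_lt with rfl | hrB
  · simpa only [h.eq_placementCost w hw γmax hγmax, h.eq_placementCost w' hw' γmax hγmax]
  · simpa only [h.eq_min r hAr hrB w hw γmax hγmax, h.eq_min r hAr hrB w' hw' γmax hγmax]
      using min_le_min_right _ hplace

theorem monotoneOn_departure (h : M.IsBellmanUpdate G V V₀ V' V₀')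
    (hV : ∀ w ∈ M.W, MonotoneOn (V (M.A + 1) w) G) : MonotoneOn V₀' G :=
  (M.monotoneOn_departureCost hV).congr fun g hg ↦ (h.eq_departureCost g hg).symm

end IsBellmanUpdate

/-- The structural properties of a pair of value functions: `V` is nondecreasing in the distance,
nondecreasing in the maximum power and nonincreasing in the shadowing, and `V₀` is nondecreasing in
the maximum power, all on admissible states with maximum power in `G`. -/
def HasMonotoneStructure {Ω R : Type*} [Preorder Ω] [Ring R] [LinearOrder R]
    (M : RelayModel Ω R) (G : Set R) (V : ℕ → Ω → R → R) (V₀ : R → R) : Prop :=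
  (∀ w ∈ M.W, ∀ γmax ∈ G, ∀ r r', M.A + 1 ≤ r → r ≤ r' → r' ≤ M.A + M.B →
    V r w γmax ≤ V r' w γmax) ∧
  (∀ r, M.A + 1 ≤ r → r ≤ M.A + M.B → ∀ w ∈ M.W, MonotoneOn (V r w) G) ∧
  (∀ r, M.A + 1 ≤ r → r ≤ M.A + M.B → ∀ γmax ∈ G, AntitoneOn (fun w ↦ V r w γmax) M.W) ∧
  MonotoneOn V₀ G

theorem IsBellmanUpdate.hasMonotoneStructure {Ω R : Type*} [Preorder Ω] [Ring R] [LinearOrder R]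
    [IsOrderedRing R] {M : RelayModel Ω R} {G : Set R} {V V' : ℕ → Ω → R → R} {V₀ V₀' : R → R}
    (h : M.IsBellmanUpdate G V V₀ V' V₀') (hG : ∀ γ ∈ M.S, ∀ g ∈ G, max γ g ∈ G)
    (hP_dist : ∀ γ ∈ M.S, ∀ w ∈ M.W,
      MonotoneOn (fun r ↦ M.Pout r γ w) (Icc (M.A + 1) (M.A + M.B)))
    (hP_shadowing : ∀ r ∈ Icc (M.A + 1) (M.A + M.B), ∀ γ ∈ M.S, AntitoneOn (M.Pout r γ) M.W)
    (hV : M.HasMonotoneStructure G V V₀) : M.HasMonotoneStructure G V' V₀' := by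
  obtain ⟨hV_dist, hV_power, -, hV₀⟩ := hV
  refine ⟨fun w hw g hg r r' hAr hrr' hrB ↦ ?_,
    fun r hAr hrB w hw ↦ h.monotoneOn_maxPower hG hV_power hV₀ hAr hrB hw,
    fun r hAr hrB g hg ↦ h.antitoneOn_shadowing hAr hrB (hP_shadowing r ⟨hAr, hrB⟩) hg,
    h.monotoneOn_departure (hV_power _ le_rfl (Nat.add_le_add_left M.B_pos _))⟩
  exact h.monotoneOn_dist hP_dist hg
    (fun v hv q hq q' hq' hqq' ↦ hV_dist v hv g hg q q' hq.1 hqq' hq'.2) hw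
    ⟨hAr, hrr'.trans hrB⟩ ⟨hAr.trans hrr', hrB⟩ hrr'

end RelayModel

theorem max_power_value_iterates_structure_general {Ω R : Type*} [Preorder Ω] [Ring R]
    [LinearOrder R] [IsOrderedRing R] (M : RelayModel Ω R) {G : Set R}
    (hG : ∀ γ ∈ M.S, ∀ g ∈ G, max γ g ∈ G)
    (hP_dist : ∀ γ ∈ M.S, ∀ w ∈ M.W,
      MonotoneOn (fun r ↦ M.Pout r γ w) (Icc (M.A + 1) (M.A + M.B)))
    (hP_shadowing : ∀ r ∈ Icc (M.A + 1) (M.A + M.B), ∀ γ ∈ M.S, AntitoneOn (M.Pout r γ) M.W)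
    {J : ℕ → ℕ → Ω → R → R} {J₀ : ℕ → R → R}
    (hinit : M.HasMonotoneStructure G (J 0) (J₀ 0))
    (hstep : ∀ k, M.IsBellmanUpdate G (J k) (J₀ k) (J (k + 1)) (J₀ (k + 1))) (k : ℕ) :
    M.HasMonotoneStructure G (J k) (J₀ k) := by
  induction k with
  | zero => exact hinit
  | succ k ih => exact (hstep k).hasMonotoneStructure hG hP_dist hP_shadowing ih

/-- Structural properties of the max-power no-backtracking value iterates: each iterate
`J^{(k)}(r,w,γ_max)` is nondecreasing in `r`, nondecreasing in `γ_max`, and nonincreasing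
in `w`; and `J₀^{(k)}(γ_max)` is nondecreasing in `γ_max`. -/
theorem max_power_value_iterates_structure
    (W : Finset ℝ) (hW : W.Nonempty) (hWpos : ∀ w ∈ W, 0 < w)
    (pW : ℝ → ℝ) (hpW : ∀ w ∈ W, 0 < pW w) (hpWsum : ∑ w ∈ W, pW w = 1)
    (S : Finset ℝ) (hS : S.Nonempty) (hSpos : ∀ γ ∈ S, 0 < γ)
    (θ : ℝ) (hθ : 0 < θ) (hθ1 : θ < 1)
    (ξo ξr : ℝ) (hξo : 0 ≤ ξo) (hξr : 0 ≤ ξr)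
    (A B : ℕ) (hB : 2 ≤ B)
    (G : Finset ℝ) (hG : G = insert 0 S)
    (Pout : ℕ → ℝ → ℝ → ℝ)
    (hPrange : ∀ r, 1 ≤ r → r ≤ A + B → ∀ γ ∈ S, ∀ w ∈ W,
      0 ≤ Pout r γ w ∧ Pout r γ w ≤ 1)
    (hPmono_r : ∀ γ ∈ S, ∀ w ∈ W, ∀ r r', 1 ≤ r → r ≤ r' → r' ≤ A + B →
      Pout r γ w ≤ Pout r' γ w)
    (hPanti_w : ∀ r, 1 ≤ r → r ≤ A + B → ∀ γ ∈ S, ∀ w ∈ W, ∀ w' ∈ W, w ≤ w' →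
      Pout r γ w' ≤ Pout r γ w)
    -- the value iterates `J^{(k)}(r,w,γ_max)` and `J₀^{(k)}(γ_max)`
    (Jk : ℕ → ℕ → ℝ → ℝ → ℝ) (J0k : ℕ → ℝ → ℝ)
    (hbase : ∀ r w γmax, Jk 0 r w γmax = 0) (hbase0 : ∀ γmax, J0k 0 γmax = 0)
    (hrec1 : ∀ k r, A + 1 ≤ r → r ≤ A + B - 1 → ∀ w ∈ W, ∀ γmax ∈ G,
      Jk (k + 1) r w γmax = min
        (S.inf' hS fun γ => ξo * Pout r γ w + ξr + J0k k (max γ γmax))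
        (θ * (∑ w' ∈ W, pW w' *
            S.inf' hS fun γ => max γ γmax + ξo * Pout (r + 1) γ w')
          + (1 - θ) * ∑ w' ∈ W, pW w' * Jk k (r + 1) w' γmax))
    (hrec2 : ∀ k, ∀ w ∈ W, ∀ γmax ∈ G,
      Jk (k + 1) (A + B) w γmax =
        S.inf' hS fun γ => ξo * Pout (A + B) γ w + ξr + J0k k (max γ γmax))
    (hrec3 : ∀ k, ∀ γmax ∈ G,
      J0k (k + 1) γmax =
        (∑ j ∈ Finset.Icc 1 (A + 1), (1 - θ) ^ (j - 1) * θ *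
          ∑ w' ∈ W, pW w' * S.inf' hS fun γ => max γ γmax + ξo * Pout j γ w')
        + (1 - θ) ^ (A + 1) * ∑ w' ∈ W, pW w' * Jk k (A + 1) w' γmax) :
    ∀ k : ℕ,
      -- nondecreasing in r
      (∀ w ∈ W, ∀ γmax ∈ G, ∀ r r', A + 1 ≤ r → r ≤ r' → r' ≤ A + B →
        Jk k r w γmax ≤ Jk k r' w γmax) ∧
      -- nondecreasing in γmax
      (∀ r, A + 1 ≤ r → r ≤ A + B → ∀ w ∈ W, ∀ γmax ∈ G, ∀ γmax' ∈ G, γmax ≤ γmax' →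
        Jk k r w γmax ≤ Jk k r w γmax') ∧
      -- nonincreasing in w
      (∀ r, A + 1 ≤ r → r ≤ A + B → ∀ γmax ∈ G, ∀ w ∈ W, ∀ w' ∈ W, w ≤ w' →
        Jk k r w' γmax ≤ Jk k r w γmax) ∧
      -- J₀^{(k)} nondecreasing in γmax
      (∀ γmax ∈ G, ∀ γmax' ∈ G, γmax ≤ γmax' → J0k k γmax ≤ J0k k γmax') :=
  max_power_value_iterates_structure_general
    ⟨W, pW, fun w hw ↦ (hpW w hw).le, S, hS, θ, hθ.le, hθ1.le, ξo, hξo, ξr, A, B, by lia, Pout⟩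
    (G := G) (by grind)
    (fun γ hγ w hw r hr r' hr' hrr' ↦ hPmono_r γ hγ w hw r r' (by grind) hrr' hr'.2)
    (fun r hr ↦ hPanti_w r (by grind) hr.2)
    (by simp [RelayModel.HasMonotoneStructure, MonotoneOn, AntitoneOn, hbase, hbase0])
    (fun k ↦ ⟨fun r hAr hrB ↦ hrec1 k r hAr (Nat.le_sub_one_of_lt hrB), hrec2 k, hrec3 k⟩)
end

section
/- Structural properties of the backtracking value iterates in the costs (Lemma: J is increasing and jointly concave in ξ_r and ξ_o): Let W ⊂ (0,∞) be a nonempty finite set with strictly positive probability mass function p_W, S ⊂ (0,∞) a nonempty finite set, θ ∈ (0,1), and integers A ≥ 0, B ≥ 1. Let P_out : {1,…,A+B} × S × W → [0,1] be any function and for w = (w_{A+1},…,w_{A+B}) ∈ W^B let g(w) := Π_{r=A+1}^{A+B} p_W(w_r). For parameters (ξ_r, ξ_o) ∈ [0,∞)², define J^{(0)} ≡ 0 on W^B and on {0,…,B−1}, and for k ≥ 0: J^{(k+1)}(w) = min_{u∈{A+1,…,A+B}, γ∈S} ( ξ_r + γ + ξ_o·P_out(u,γ,w_u) + J^{(k)}(A+B−u;𝟎)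 ), and J^{(k+1)}(z;𝟎) = Σ_{j=1}^{A+B−z} (1−θ)^{j−1}·θ·E_W min_{γ∈S}( γ + ξ_o·P_out(z+j,γ,·) ) + (1−θ)^{A+B−z}·Σ_{w∈W^B} g(w)·J^{(k)}(w), for 0 ≤ z ≤ B−1, where E_W f := Σ_{w∈W} p_W(w) f(w). Then for every k ≥ 0, each of the maps (ξ_r, ξ_o) ↦ J^{(k)}(w) (for each fixed w ∈ W^B) and (ξ_r, ξ_o) ↦ J^{(k)}(z;𝟎) (for each fixed 0 ≤ z ≤ B−1) is nondecreasing in each coordinate and jointly concave on [0,∞)². -/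
/-! Monotone concave functions are closed under nonnegative combinations and finite minima. For a
fixed placement decision the one-step cost is affine in `(ξ_r, ξ_o)` with nonnegative slopes `1` and
`P_out`, and the Bellman recursion combines such costs and the previous iterates by exactly these
operations. -/

section MonotoneConcaveOn

variable {E ι : Type*} [AddCommMonoid E] [SMul ℝ E] [Preorder E] {s : Set E}

/-- A real function that is both monotone and concave on `s`. Bundling the two properties lets a
single induction carry both through the value iterates. -/
def MonotoneConcaveOn (s : Set E) (f : E → ℝ) : Prop :=
  MonotoneOn f s ∧ ConcaveOn ℝ s f

namespace MonotoneConcaveOn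

variable {f g : E → ℝ}

theorem congr (hf : MonotoneConcaveOn s f) (hfg : s.EqOn f g) : MonotoneConcaveOn s g :=
  ⟨hf.1.congr hfg, hf.2.congr hfg⟩

theorem const (hs : Convex ℝ s) (c : ℝ) : MonotoneConcaveOn s (fun _ => c) :=
  ⟨monotoneOn_const, concaveOn_const c hs⟩

theorem add (hf : MonotoneConcaveOn s f) (hg : MonotoneConcaveOn s g) :
    MonotoneConcaveOn s (fun x => f x + g x) :=
  ⟨hf.1.add hg.1, hf.2.add hg.2⟩

theorem const_mul {c : ℝ} (hc : 0 ≤ c) (hf : MonotoneConcaveOn s f) :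
    MonotoneConcaveOn s (fun x => c * f x) :=
  ⟨(monotone_mul_left_of_nonneg hc).comp_monotoneOn hf.1, hf.2.smul hc⟩

theorem inf (hf : MonotoneConcaveOn s f) (hg : MonotoneConcaveOn s g) :
    MonotoneConcaveOn s (f ⊓ g) :=
  ⟨hf.1.inf hg.1, hf.2.inf hg.2⟩

theorem finset_sum (hs : Convex ℝ s) {t : Finset ι} {f : ι → E → ℝ}
    (hf : ∀ i ∈ t, MonotoneConcaveOn s (f i)) :
    MonotoneConcaveOn s (fun x => ∑ i ∈ t, f i x) := by
  simpa only [Finset.sum_fn] using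
    Finset.sum_induction f (MonotoneConcaveOn s) (fun _ _ => add) (const hs 0) hf

theorem finset_inf' {t : Finset ι} (ht : t.Nonempty) {f : ι → E → ℝ}
    (hf : ∀ i ∈ t, MonotoneConcaveOn s (f i)) :
    MonotoneConcaveOn s (fun x => t.inf' ht (fun i => f i x)) := by
  simpa only [← Finset.inf'_apply] using
    Finset.inf'_induction ht f (fun _ hf _ hg => inf hf hg) hf

end MonotoneConcaveOn

end MonotoneConcaveOn

section Coordinates

variable {s : Set (ℝ × ℝ)}

theorem monotoneConcaveOn_fst (hs : Convex ℝ s) : MonotoneConcaveOn s Prod.fst :=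
  ⟨monotone_fst.monotoneOn s, (LinearMap.fst ℝ ℝ ℝ).concaveOn hs⟩

theorem monotoneConcaveOn_snd (hs : Convex ℝ s) : MonotoneConcaveOn s Prod.snd :=
  ⟨monotone_snd.monotoneOn s, (LinearMap.snd ℝ ℝ ℝ).concaveOn hs⟩

theorem monotoneConcaveOn_snd_mul_const (hs : Convex ℝ s) {c : ℝ} (hc : 0 ≤ c) :
    MonotoneConcaveOn s (fun x => x.2 * c) := by
  simpa only [mul_comm] using (monotoneConcaveOn_snd hs).const_mul hc

theorem MonotoneConcaveOn.coordinatewise {a b : ℝ} {F : ℝ → ℝ → ℝ}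
    (h : MonotoneConcaveOn (Set.Ici a ×ˢ Set.Ici b) (fun p : ℝ × ℝ => F p.1 p.2)) :
    (∀ x x' y : ℝ, a ≤ x → x ≤ x' → b ≤ y → F x y ≤ F x' y) ∧
    (∀ x y y' : ℝ, a ≤ x → b ≤ y → y ≤ y' → F x y ≤ F x y') ∧
    ConcaveOn ℝ (Set.Ici a ×ˢ Set.Ici b) (fun p : ℝ × ℝ => F p.1 p.2) :=
  ⟨fun _ _ _ hx hxx' hy => h.1 (Set.mk_mem_prod hx hy) (Set.mk_mem_prod (hx.trans hxx') hy)
      (Prod.mk_le_mk.2 ⟨hxx', le_rfl⟩),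
    fun _ _ _ hx hy hyy' => h.1 (Set.mk_mem_prod hx hy) (Set.mk_mem_prod hx (hy.trans hyy'))
      (Prod.mk_le_mk.2 ⟨le_rfl, hyy'⟩),
    h.2⟩

end Coordinates

section Backtracking

variable {α : Type*} {A B : ℕ} {S : Finset ℝ} {Pout : ℕ → ℝ → α → ℝ} {s : Set (ℝ × ℝ)}

/-- The Bellman update at a vector `v` of measured shadowing values: choose a distance `A + 1 + i`
and a power `γ`, then continue from the residual state with value `H`. The costs `(ξ_r, ξ_o)` are
the pair `ξ`; as `i < B`, the subtraction giving the residual state does not truncate. -/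
noncomputable def placementUpdate (A B : ℕ) (S : Finset ℝ)
    (hne : ((Finset.univ : Finset (Fin B)) ×ˢ S).Nonempty) (Pout : ℕ → ℝ → α → ℝ)
    (H : ℕ → ℝ) (ξ : ℝ × ℝ) (v : Fin B → α) : ℝ :=
  ((Finset.univ : Finset (Fin B)) ×ˢ S).inf' hne
    (fun p => ξ.1 + p.2 + ξ.2 * Pout (A + 1 + (p.1 : ℕ)) p.2 (v p.1)
      + H (A + B - (A + 1 + (p.1 : ℕ))))

/-- The Bellman update at `(z;𝟎)`: either the line ends `j ≤ A + B - z` steps further on, and the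
last hop uses the best power there, or it goes on and the next `B` shadowing values are measured,
with continuation value `J`. -/
noncomputable def residualUpdate (W : Finset α) (pW : α → ℝ) (S : Finset ℝ) (hS : S.Nonempty)
    (θ : ℝ) (A B : ℕ) (Pout : ℕ → ℝ → α → ℝ) (J : (Fin B → α) → ℝ) (ξo : ℝ) (z : ℕ) : ℝ :=
  (∑ j ∈ Finset.Icc 1 (A + B - z), (1 - θ) ^ (j - 1) * θ *
    ∑ w ∈ W, pW w * S.inf' hS (fun γ => γ + ξo * Pout (z + j) γ w))
  + (1 - θ) ^ (A + B - z) *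
    ∑ v : Fin B → {x // x ∈ W}, (∏ i, pW (v i)) * J (fun i => (v i : α))

theorem monotoneConcaveOn_placementUpdate (hs : Convex ℝ s)
    (hne : ((Finset.univ : Finset (Fin B)) ×ˢ S).Nonempty) {H : ℝ × ℝ → ℕ → ℝ} {v : Fin B → α}
    (hP : ∀ i : Fin B, ∀ γ ∈ S, 0 ≤ Pout (A + 1 + i) γ (v i))
    (hH : ∀ z < B, MonotoneConcaveOn s (fun ξ => H ξ z)) :
    MonotoneConcaveOn s (fun ξ => placementUpdate A B S hne Pout (H ξ) ξ v) := by
  refine .finset_inf' hne fun ⟨i, γ⟩ hiγ => ?_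
  have hγ : γ ∈ S := (Finset.mem_product.1 hiγ).2
  have hresidual : A + B - (A + 1 + i) < B := by omega
  exact (((monotoneConcaveOn_fst hs).add (.const hs γ)).add
    (monotoneConcaveOn_snd_mul_const hs (hP i γ hγ))).add (hH _ hresidual)

variable {W : Finset α} {pW : α → ℝ} {θ : ℝ}

theorem monotoneConcaveOn_expected_min_power (hs : Convex ℝ s) (hpW : ∀ w ∈ W, 0 ≤ pW w)
    (hS : S.Nonempty) {P : ℝ → α → ℝ} (hP : ∀ γ ∈ S, ∀ w ∈ W, 0 ≤ P γ w) :
    MonotoneConcaveOn s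
      (fun ξ => ∑ w ∈ W, pW w * S.inf' hS (fun γ => γ + ξ.2 * P γ w)) :=
  .finset_sum hs fun w hw => .const_mul (hpW w hw) <| .finset_inf' hS fun γ hγ =>
    .add (.const hs γ) (monotoneConcaveOn_snd_mul_const hs (hP γ hγ w hw))

theorem monotoneConcaveOn_residualUpdate (hs : Convex ℝ s) (hpW : ∀ w ∈ W, 0 ≤ pW w)
    (hS : S.Nonempty) (hθ : 0 ≤ θ) (hθ1 : θ ≤ 1)
    (hP : ∀ r, 1 ≤ r → r ≤ A + B → ∀ γ ∈ S, ∀ w ∈ W, 0 ≤ Pout r γ w)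
    {J : ℝ × ℝ → (Fin B → α) → ℝ}
    (hJ : ∀ v : Fin B → α, (∀ i, v i ∈ W) → MonotoneConcaveOn s (fun ξ => J ξ v)) (z : ℕ) :
    MonotoneConcaveOn s (fun ξ => residualUpdate W pW S hS θ A B Pout (J ξ) ξ.2 z) := by
  have hpow (n : ℕ) : 0 ≤ (1 - θ) ^ n := pow_nonneg (sub_nonneg.2 hθ1) n
  refine .add (.finset_sum hs fun j hj => .const_mul (mul_nonneg (hpow _) hθ) ?lastHop)
    (.const_mul (hpow _) <| .finset_sum hs fun v _ => .const_mul ?weight (hJ _ fun i => (v i).2))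
  case lastHop =>
    obtain ⟨hj_pos, hj_le⟩ := Finset.mem_Icc.1 hj
    exact monotoneConcaveOn_expected_min_power hs hpW hS (hP (z + j) (by omega) (by omega))
  case weight => exact Finset.prod_nonneg fun i _ => hpW _ (v i).2

theorem backtracking_iterates_concave_in_costs_general (hs : Convex ℝ s)
    (hpW : ∀ w ∈ W, 0 ≤ pW w) (hθ : 0 ≤ θ) (hθ1 : θ ≤ 1)
    (hP : ∀ r, 1 ≤ r → r ≤ A + B → ∀ γ ∈ S, ∀ w ∈ W, 0 ≤ Pout r γ w)
    (hne : ((Finset.univ : Finset (Fin B)) ×ˢ S).Nonempty)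
    (J : ℝ × ℝ → ℕ → (Fin B → α) → ℝ) (H : ℝ × ℝ → ℕ → ℕ → ℝ)
    (hJ_zero : ∀ ξ ∈ s, ∀ v, (∀ i, v i ∈ W) → J ξ 0 v = 0)
    (hH_zero : ∀ ξ ∈ s, ∀ z < B, H ξ 0 z = 0)
    (hJ_succ : ∀ ξ ∈ s, ∀ k v, (∀ i, v i ∈ W) →
      J ξ (k + 1) v = placementUpdate A B S hne Pout (H ξ k) ξ v)
    (hH_succ : ∀ ξ ∈ s, ∀ k, ∀ z < B,
      H ξ (k + 1) z = residualUpdate W pW S hne.snd θ A B Pout (J ξ k) ξ.2 z) (k : ℕ) :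
    (∀ v, (∀ i, v i ∈ W) → MonotoneConcaveOn s (fun ξ => J ξ k v)) ∧
      (∀ z < B, MonotoneConcaveOn s (fun ξ => H ξ k z)) := by
  induction k with
  | zero =>
    exact ⟨fun v hv => (MonotoneConcaveOn.const hs 0).congr fun ξ hξ => (hJ_zero ξ hξ v hv).symm,
      fun z hz => (MonotoneConcaveOn.const hs 0).congr fun ξ hξ => (hH_zero ξ hξ z hz).symm⟩
  | succ k ih =>
    obtain ⟨ihJ, ihH⟩ := ih
    refine ⟨fun v hv => ?_, fun z hz => ?_⟩
    · have hPv (i : Fin B) (γ : ℝ) (hγ : γ ∈ S) : 0 ≤ Pout (A + 1 + i) γ (v i) :=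
        hP _ (by omega) (by omega) γ hγ _ (hv i)
      exact (monotoneConcaveOn_placementUpdate hs hne hPv ihH).congr
        fun ξ hξ => (hJ_succ ξ hξ k v hv).symm
    · exact (monotoneConcaveOn_residualUpdate hs hpW hne.snd hθ hθ1 hP ihJ z).congr
        fun ξ hξ => (hH_succ ξ hξ k z hz).symm

end Backtracking

/-- Structural properties of the backtracking value iterates in the costs: each iterate
`J^{(k)}(w)` (for `w ∈ W^B`) and `J^{(k)}(z;𝟎)` (for `0 ≤ z ≤ B−1`) is, as a function of
`(ξ_r, ξ_o)`, nondecreasing in each coordinate and jointly concave on `[0,∞)²`.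
Positions `u = A+1+i`, `i : Fin B`, range over `{A+1,…,A+B}`. -/
theorem backtracking_iterates_concave_in_costs
    (W : Finset ℝ) (hW : W.Nonempty) (hWpos : ∀ w ∈ W, 0 < w)
    (pW : ℝ → ℝ) (hpW : ∀ w ∈ W, 0 < pW w) (hpWsum : ∑ w ∈ W, pW w = 1)
    (S : Finset ℝ) (hS : S.Nonempty) (hSpos : ∀ γ ∈ S, 0 < γ)
    (θ : ℝ) (hθ : 0 < θ) (hθ1 : θ < 1)
    (A B : ℕ) (hB : 1 ≤ B)
    (Pout : ℕ → ℝ → ℝ → ℝ)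
    (hPrange : ∀ r, 1 ≤ r → r ≤ A + B → ∀ γ ∈ S, ∀ w ∈ W,
      0 ≤ Pout r γ w ∧ Pout r γ w ≤ 1)
    (hne : ((Finset.univ : Finset (Fin B)) ×ˢ S).Nonempty)
    -- the value iterates `J^{(k)}(w)` and `J^{(k)}(z;𝟎)` at parameters `(ξ_r, ξ_o)`
    (Jk : ℝ → ℝ → ℕ → (Fin B → ℝ) → ℝ) (Hk : ℝ → ℝ → ℕ → ℕ → ℝ)
    (hbase : ∀ ξr ξo v, Jk ξr ξo 0 v = 0) (hbase0 : ∀ ξr ξo z, Hk ξr ξo 0 z = 0)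
    (hrec1 : ∀ ξr ξo k (v : Fin B → ℝ), (∀ i, v i ∈ W) →
      Jk ξr ξo (k + 1) v =
        ((Finset.univ : Finset (Fin B)) ×ˢ S).inf' hne
          (fun p => ξr + p.2 + ξo * Pout (A + 1 + (p.1 : ℕ)) p.2 (v p.1)
            + Hk ξr ξo k (A + B - (A + 1 + (p.1 : ℕ)))))
    (hrec2 : ∀ ξr ξo k z, z ≤ B - 1 →
      Hk ξr ξo (k + 1) z =
        (∑ j ∈ Finset.Icc 1 (A + B - z), (1 - θ) ^ (j - 1) * θ *
          ∑ w ∈ W, pW w * S.inf' hS (fun γ => γ + ξo * Pout (z + j) γ w))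
        + (1 - θ) ^ (A + B - z) *
          ∑ v : Fin B → {x // x ∈ W},
            (∏ i, pW (v i)) * Jk ξr ξo k (fun i => (v i : ℝ))) :
    ∀ k : ℕ,
      (∀ v : Fin B → ℝ, (∀ i, v i ∈ W) →
        (∀ ξr ξr' ξo : ℝ, 0 ≤ ξr → ξr ≤ ξr' → 0 ≤ ξo →
          Jk ξr ξo k v ≤ Jk ξr' ξo k v) ∧
        (∀ ξr ξo ξo' : ℝ, 0 ≤ ξr → 0 ≤ ξo → ξo ≤ ξo' →
          Jk ξr ξo k v ≤ Jk ξr ξo' k v) ∧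
        ConcaveOn ℝ (Set.Ici (0 : ℝ) ×ˢ Set.Ici (0 : ℝ))
          (fun p : ℝ × ℝ => Jk p.1 p.2 k v)) ∧
      (∀ z, z ≤ B - 1 →
        (∀ ξr ξr' ξo : ℝ, 0 ≤ ξr → ξr ≤ ξr' → 0 ≤ ξo →
          Hk ξr ξo k z ≤ Hk ξr' ξo k z) ∧
        (∀ ξr ξo ξo' : ℝ, 0 ≤ ξr → 0 ≤ ξo → ξo ≤ ξo' →
          Hk ξr ξo k z ≤ Hk ξr ξo' k z) ∧
        ConcaveOn ℝ (Set.Ici (0 : ℝ) ×ˢ Set.Ici (0 : ℝ))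
          (fun p : ℝ × ℝ => Hk p.1 p.2 k z)) := by
  have hQ : Convex ℝ (Set.Ici (0 : ℝ) ×ˢ Set.Ici (0 : ℝ)) := (convex_Ici 0).prod (convex_Ici 0)
  have h := backtracking_iterates_concave_in_costs_general hQ (fun w hw => (hpW w hw).le) hθ.le
    hθ1.le (fun r hr hrAB γ hγ w hw => (hPrange r hr hrAB γ hγ w hw).1) hne
    (fun ξ => Jk ξ.1 ξ.2) (fun ξ => Hk ξ.1 ξ.2)
    (fun ξ _ v _ => hbase ξ.1 ξ.2 v) (fun ξ _ z _ => hbase0 ξ.1 ξ.2 z)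
    (fun ξ _ => hrec1 ξ.1 ξ.2) (fun ξ _ k z hz => hrec2 ξ.1 ξ.2 k z (Nat.le_sub_one_of_lt hz))
  exact fun k =>
    ⟨fun v hv => ((h k).1 v hv).coordinatewise (F := fun ξr ξo => Jk ξr ξo k v),
      fun z hz => ((h k).2 z (Nat.lt_of_le_sub_one hB hz)).coordinatewise
        (F := fun ξr ξo => Hk ξr ξo k z)⟩
end

section
/- Correctness of the reduced function iteration for the sum-power no-backtracking problem: in the setting of the sum-power no-backtracking value iteration, define the reduced iteration V^{(0)}(r) := 0 for A+1 ≤ r ≤ A+B, V^{(0)}(𝟎) := 0, and for k ≥ 0: V^{(k+1)}(r) = Σ_{w∈W} p_W(w)·min{ m(r,w) + ξ_r + V^{(k)}(𝟎) , θ·E_W m(r+1,·) + (1−θ)·V^{(k)}(r+1) } for A+1 ≤ r ≤ A+B−1; V^{(k+1)}(A+B) = Σ_{w∈W} p_W(w)·( m(A+B,w) + ξ_r ) + V^{(k)}(𝟎); V^{(k+1)}(𝟎) = Σ_{j=1}^{A+1} (1−θ)^{j−1}·θ·E_W m(j,·) + (1−θ)^{A+1}·V^{(k)}(A+1). Then for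 every k ≥ 0 and every A+1 ≤ r ≤ A+B: V^{(k)}(r) = Σ_{w∈W} p_W(w)·J^{(k)}(r,w) and V^{(k)}(𝟎) = J₀^{(k)}, where (J^{(k)}, J₀^{(k)}) are the value iterates defined by (J^{(0)}, J₀^{(0)}) = (0,0) and (J^{(k+1)}, J₀^{(k+1)}) = T(J^{(k)}, J₀^{(k)}). -/
noncomputable section

/-- Expectation `E_W f = Σ_{w∈W} p_W(w) f(w)` over the shadowing. -/
def EW (W : Finset ℝ) (pW : ℝ → ℝ) (f : ℝ → ℝ) : ℝ := ∑ w ∈ W, pW w * f w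

/-- Optimal one-hop cost `m(r,w) = min_{γ∈S}(γ + ξ_o·P_out(r,γ,w))`. -/
def hopCost (S : Finset ℝ) (hS : S.Nonempty) (Pout : ℕ → ℝ → ℝ → ℝ) (ξo : ℝ)
    (r : ℕ) (w : ℝ) : ℝ :=
  S.inf' hS fun γ => γ + ξo * Pout r γ w

/-- The Bellman operator `T` of the sum-power no-backtracking problem, acting on pairs
`(J, J₀)`. -/
def bellmanT (W : Finset ℝ) (pW : ℝ → ℝ) (S : Finset ℝ) (hS : S.Nonempty)
    (Pout : ℕ → ℝ → ℝ → ℝ) (θ ξo ξr : ℝ) (A B : ℕ)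
    (p : (ℕ → ℝ → ℝ) × ℝ) : (ℕ → ℝ → ℝ) × ℝ :=
  (fun r w =>
    if r = A + B then hopCost S hS Pout ξo (A + B) w + ξr + p.2
    else if A + 1 ≤ r ∧ r ≤ A + B - 1 then
      min (hopCost S hS Pout ξo r w + ξr + p.2)
          (θ * EW W pW (hopCost S hS Pout ξo (r + 1))
            + (1 - θ) * EW W pW (p.1 (r + 1)))
    else 0,
   (∑ k ∈ Finset.Icc 1 (A + 1), (1 - θ) ^ (k - 1) * θ * EW W pW (hopCost S hS Pout ξo k))
     + (1 - θ) ^ (A + 1) * EW W pW (p.1 (A + 1)))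

/-!
The Bellman update at a state `(r, w)` sees the current value function only through `J₀` and the
average `E_W J(r+1,·)`, so the average of the updated function is determined by the averages of the
current one. At `r = A + B` this uses that the weights sum to one, which lets the constant `J₀` be
taken out of the expectation.
-/

section ReducedIteration

/-- One step of the reduced iteration: `v'` is obtained from `v`, where `v.1 r` is the averaged
value at distance `r` and `v.2` the value at `𝟎`. It is a relation rather than an operator because
the recursion prescribes `v'.1` only for `A + 1 ≤ r ≤ A + B`. -/
def IsReducedStep (W : Finset ℝ) (pW : ℝ → ℝ) (S : Finset ℝ) (hS : S.Nonempty)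
    (Pout : ℕ → ℝ → ℝ → ℝ) (θ ξo ξr : ℝ) (A B : ℕ) (v v' : (ℕ → ℝ) × ℝ) : Prop :=
  (∀ r, A + 1 ≤ r → r ≤ A + B - 1 →
    v'.1 r = EW W pW fun w =>
      min (hopCost S hS Pout ξo r w + ξr + v.2)
          (θ * EW W pW (hopCost S hS Pout ξo (r + 1)) + (1 - θ) * v.1 (r + 1))) ∧
  v'.1 (A + B) = EW W pW (fun w => hopCost S hS Pout ξo (A + B) w + ξr) + v.2 ∧
  v'.2 = (∑ j ∈ Finset.Icc 1 (A + 1),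
      (1 - θ) ^ (j - 1) * θ * EW W pW (hopCost S hS Pout ξo j))
    + (1 - θ) ^ (A + 1) * v.1 (A + 1)

/-- `v` is the shadowing average of the value function `p = (J, J₀)`. Agreement is required only
at the distances `A + 1 ≤ r ≤ A + B` of the decision problem. -/
def IsShadowAverage (W : Finset ℝ) (pW : ℝ → ℝ) (A B : ℕ)
    (v : (ℕ → ℝ) × ℝ) (p : (ℕ → ℝ → ℝ) × ℝ) : Prop :=
  (∀ r, A + 1 ≤ r → r ≤ A + B → v.1 r = EW W pW (p.1 r)) ∧ v.2 = p.2

variable {W : Finset ℝ} {pW : ℝ → ℝ} {S : Finset ℝ} {hS : S.Nonempty}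
  {Pout : ℕ → ℝ → ℝ → ℝ} {θ ξo ξr : ℝ} {A B : ℕ}

lemma EW_add_const (hpW : ∑ w ∈ W, pW w = 1) (f : ℝ → ℝ) (c : ℝ) :
    EW W pW (fun w => f w + c) = EW W pW f + c := by
  simp only [EW, mul_add, Finset.sum_add_distrib, ← Finset.sum_mul, hpW, one_mul]

lemma bellmanT_fst_last (p : (ℕ → ℝ → ℝ) × ℝ) :
    (bellmanT W pW S hS Pout θ ξo ξr A B p).1 (A + B) =
      fun w => hopCost S hS Pout ξo (A + B) w + ξr + p.2 :=
  funext fun _ => if_pos rfl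

lemma bellmanT_fst_of_lt {r : ℕ} (hAr : A + 1 ≤ r) (hr : r < A + B) (p : (ℕ → ℝ → ℝ) × ℝ) :
    (bellmanT W pW S hS Pout θ ξo ξr A B p).1 r = fun w =>
      min (hopCost S hS Pout ξo r w + ξr + p.2)
        (θ * EW W pW (hopCost S hS Pout ξo (r + 1)) + (1 - θ) * EW W pW (p.1 (r + 1))) :=
  funext fun _ => (if_neg hr.ne).trans (if_pos ⟨hAr, Nat.le_sub_one_of_lt hr⟩)

lemma IsShadowAverage.bellmanT {v v' : (ℕ → ℝ) × ℝ} {p : (ℕ → ℝ → ℝ) × ℝ}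
    (hpW : ∑ w ∈ W, pW w = 1) (hB : 1 ≤ B) (hv : IsShadowAverage W pW A B v p)
    (hstep : IsReducedStep W pW S hS Pout θ ξo ξr A B v v') :
    IsShadowAverage W pW A B v' (bellmanT W pW S hS Pout θ ξo ξr A B p) := by
  obtain ⟨havg, hzero⟩ := hv
  obtain ⟨hstep_lt, hstep_last, hstep_zero⟩ := hstep
  refine ⟨fun r hAr hr => ?_, ?_⟩
  · rcases hr.eq_or_lt with rfl | hlt
    · rw [hstep_last, bellmanT_fst_last, ← EW_add_const hpW, hzero]
    · rw [hstep_lt r hAr (Nat.le_sub_one_of_lt hlt), bellmanT_fst_of_lt hAr hlt,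
        havg (r + 1) (by omega) hlt, hzero]
  · rw [hstep_zero, havg (A + 1) le_rfl (Nat.add_le_add_left hB A)]
    rfl

theorem reduced_iteration_correct_general {v : ℕ → (ℕ → ℝ) × ℝ} {p : (ℕ → ℝ → ℝ) × ℝ}
    (hpW : ∑ w ∈ W, pW w = 1) (hB : 1 ≤ B) (hinit : IsShadowAverage W pW A B (v 0) p)
    (hstep : ∀ k, IsReducedStep W pW S hS Pout θ ξo ξr A B (v k) (v (k + 1))) (k : ℕ) :
    IsShadowAverage W pW A B (v k) ((bellmanT W pW S hS Pout θ ξo ξr A B)^[k] p) := by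
  induction k with
  | zero => exact hinit
  | succ k ih =>
    rw [Function.iterate_succ_apply']
    exact ih.bellmanT hpW hB (hstep k)

end ReducedIteration

/-- Correctness of the reduced function iteration for the sum-power no-backtracking
problem: the reduced iterates `V^{(k)}` coincide with the `W`-averages of the value
iterates `J^{(k)}`, and `V^{(k)}(𝟎) = J₀^{(k)}`. -/
theorem reduced_iteration_correct
    (W : Finset ℝ) (hW : W.Nonempty) (hWpos : ∀ w ∈ W, 0 < w)
    (pW : ℝ → ℝ) (hpW : ∀ w ∈ W, 0 < pW w) (hpWsum : ∑ w ∈ W, pW w = 1)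
    (S : Finset ℝ) (hS : S.Nonempty) (hSpos : ∀ γ ∈ S, 0 < γ)
    (θ : ℝ) (hθ : 0 < θ) (hθ1 : θ < 1)
    (ξo ξr : ℝ) (hξo : 0 ≤ ξo) (hξr : 0 ≤ ξr)
    (A B : ℕ) (hB : 2 ≤ B)
    (Pout : ℕ → ℝ → ℝ → ℝ)
    (hPrange : ∀ r, 1 ≤ r → r ≤ A + B → ∀ γ ∈ S, ∀ w ∈ W,
      0 ≤ Pout r γ w ∧ Pout r γ w ≤ 1)
    -- the value iterates `(J^{(k)}, J₀^{(k)}) = T^k (0, 0)`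
    (Jk : ℕ → (ℕ → ℝ → ℝ) × ℝ)
    (hJk : ∀ k, Jk k = (bellmanT W pW S hS Pout θ ξo ξr A B)^[k] (fun _ _ => 0, 0))
    -- the reduced iterates `(V^{(k)}, V^{(k)}(𝟎))`
    (Vk : ℕ → (ℕ → ℝ) × ℝ)
    (hV0 : ∀ r, (Vk 0).1 r = 0) (hV0' : (Vk 0).2 = 0)
    (hVrec : ∀ k : ℕ,
      (∀ r, A + 1 ≤ r → r ≤ A + B - 1 →
        (Vk (k + 1)).1 r = ∑ w ∈ W, pW w *
          min (hopCost S hS Pout ξo r w + ξr + (Vk k).2)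
              (θ * EW W pW (hopCost S hS Pout ξo (r + 1))
                + (1 - θ) * (Vk k).1 (r + 1))) ∧
      ((Vk (k + 1)).1 (A + B)
        = (∑ w ∈ W, pW w * (hopCost S hS Pout ξo (A + B) w + ξr)) + (Vk k).2) ∧
      ((Vk (k + 1)).2
        = (∑ j ∈ Finset.Icc 1 (A + 1),
            (1 - θ) ^ (j - 1) * θ * EW W pW (hopCost S hS Pout ξo j))
          + (1 - θ) ^ (A + 1) * (Vk k).1 (A + 1))) :
    ∀ k : ℕ,
      (∀ r, A + 1 ≤ r → r ≤ A + B →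
        (Vk k).1 r = ∑ w ∈ W, pW w * (Jk k).1 r w) ∧
      (Vk k).2 = (Jk k).2 := by
  intro k
  have hinit : IsShadowAverage W pW A B (Vk 0) (fun _ _ => 0, 0) :=
    ⟨fun r _ _ => by simp only [hV0, EW, mul_zero, Finset.sum_const_zero], hV0'⟩
  rw [hJk]
  exact reduced_iteration_correct_general hpWsum (one_le_two.trans hB) hinit hVrec k
end
end
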